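/- arXiv:2008.06403 — 9 statements merged into one kernel-verified Lean document; each statement's English description precedes it below -/
import Mathlib

section
/- Let p ≥ 5 be a prime, let n, k, t be natural numbers with k ≤ n, let H be an (n−k)×n matrix over ZMod p, and let C = {c ∈ (ZMod p)^n : H·cᵀ = 0} be the code with parity-check matrix H. Assume that every nonzero c ∈ C whose entries all lie in {0, 1, −1, 2, −2} has restricted weight w̃(c) > 2t. Then for any two vectors e, e′ ∈ (ZMod p)^n whose entries all lie in {0, 1, −1} and whose Hamming weights are both at most t, the equality H·eᵀ = H·e′ᵀ implies e = e′. -/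
/-- The restricted weight of a vector over `ZMod p`: the number of entries equal to `±1`
plus twice the number of entries equal to `±2`. -/
def restrictedWeight {p n : ℕ} (x : Fin n → ZMod p) : ℕ :=
  ∑ i, if x i = 1 ∨ x i = -1 then 1 else if x i = 2 ∨ x i = -2 then 2 else 0

theorem stmt0 {p : ℕ} [Fact p.Prime] (hp : 5 ≤ p) {n k t : ℕ} (hkn : k ≤ n)
    (H : Matrix (Fin (n - k)) (Fin n) (ZMod p))
    (hmin : ∀ c : Fin n → ZMod p, H.mulVec c = 0 → c ≠ 0 →
      (∀ i, c i ∈ ({0, 1, -1, 2, -2} : Set (ZMod p))) → 2 * t < restrictedWeight c) :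
    ∀ e e' : Fin n → ZMod p,
      (∀ i, e i ∈ ({0, 1, -1} : Set (ZMod p))) →
      (∀ i, e' i ∈ ({0, 1, -1} : Set (ZMod p))) →
      hammingNorm e ≤ t → hammingNorm e' ≤ t →
      H.mulVec e = H.mulVec e' → e = e' := by
  intro e e' he he' hw hw' hH
  by_contra hne
  have h1 : (1 : ZMod p) ≠ 0 := one_ne_zero
  have h2 : (2 : ZMod p) ≠ 0 := by
    intro h
    have h3 : ((2 : ℕ) : ZMod p) = 0 := by exact_mod_cast h
    rw [ZMod.natCast_eq_zero_iff] at h3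
    have := Nat.le_of_dvd (by norm_num) h3
    omega
  have hlt := hmin (e - e') (by rw [Matrix.mulVec_sub, hH, sub_self]) (sub_ne_zero.mpr hne) (by
    intro i
    have a := he i
    have b := he' i
    simp only [Set.mem_insert_iff, Set.mem_singleton_iff, Pi.sub_apply] at a b ⊢
    rcases a with a | a | a <;> rcases b with b | b | b <;> rw [a, b] <;> grind)
  have hle : restrictedWeight (e - e') ≤ hammingNorm e + hammingNorm e' := by
    unfold restrictedWeight hammingNorm
    rw [Finset.card_filter, Finset.card_filter, ← Finset.sum_add_distrib]
    apply Finset.sum_le_sum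
    intro i _
    have a := he i
    have b := he' i
    simp only [Set.mem_insert_iff, Set.mem_singleton_iff, Pi.sub_apply] at a b ⊢
    rcases a with a | a | a <;> rcases b with b | b | b <;> simp only [a, b] <;> clear a b hmin he he' hw hw' hH hne hlt <;>
      split_ifs <;> simp_all
  omega
end

section
/- Let p ≥ 5 be a prime, n ≥ 1 and t ≤ 2n natural numbers, and a ∈ (ZMod p)^n an arbitrary vector. Then the cardinality of the set {x ∈ (ZMod p)^n : every entry of x − a lies in {0, 1, −1, 2, −2} and w̃(x − a) ≤ t} equals Ṽ(n,t) = Σ_{i=0}^{t} Σ_{j=max(0,i−n)}^{⌊i/2⌋} C(n,j)·C(n−j, i−2j)·2^{i−j}; in particular this cardinality does not depend on the center a. -/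
/-- The volume `Ṽ(n,t)` of the restricted ball of radius `t` in dimension `n`. -/
def Vtilde (n t : ℕ) : ℕ :=
  ∑ i ∈ Finset.range (t + 1), ∑ j ∈ Finset.Icc (i - n) (i / 2),
    n.choose j * (n - j).choose (i - 2 * j) * 2 ^ (i - j)

open Polynomial in
lemma aux_coeff (n i : ℕ) :
    ((1 + 2 * X + 2 * X ^ 2 : ℕ[X]) ^ n).coeff i =
      ∑ j ∈ Finset.Icc (i - n) (i / 2),
        n.choose j * (n - j).choose (i - 2 * j) * 2 ^ (i - j) := by
  have h1 : ∀ m k : ℕ, ((1 + 2 * X : ℕ[X]) ^ m).coeff k = m.choose k * 2 ^ k := by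
    intro m k
    have : (1 + 2 * X : ℕ[X]) ^ m = ((1 + X : ℕ[X]) ^ m).comp (C 2 * X) := by
      simp
    rw [this, comp_C_mul_X_coeff, coeff_one_add_X_pow]
    simp
  rw [add_comm (1 + 2 * X : ℕ[X]), add_pow, finset_sum_coeff]
  have h2 : ∀ j ∈ Finset.range (n + 1),
      ((2 * X ^ 2 : ℕ[X]) ^ j * (1 + 2 * X) ^ (n - j) * (n.choose j : ℕ[X])).coeff i =
      if 2 * j ≤ i then n.choose j * (n - j).choose (i - 2 * j) * 2 ^ (i - j) else 0 := by
    intro j _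
    have : (2 * X ^ 2 : ℕ[X]) ^ j * (1 + 2 * X) ^ (n - j) * (n.choose j : ℕ[X]) =
        C (2 ^ j * n.choose j) * ((1 + 2 * X) ^ (n - j) * X ^ (2 * j)) := by
      rw [mul_pow, ← pow_mul]
      simp
      ring
    rw [this, coeff_C_mul, coeff_mul_X_pow', h1]
    split_ifs with h
    · have : i - j = j + (i - 2 * j) := by omega
      rw [this, pow_add]; ring
    · simp
  rw [Finset.sum_congr rfl h2, ← Finset.sum_filter]
  have hz : ∀ j, j ≤ n → j < i - n → (n - j).choose (i - 2 * j) = 0 := fun j h h' =>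
    Nat.choose_eq_zero_of_lt (by omega)
  symm
  rw [← Finset.sum_filter_add_sum_filter_not (Finset.Icc (i - n) (i / 2)) (fun j => j ≤ n),
    ← Finset.sum_filter_add_sum_filter_not
      (Finset.filter (fun j => 2 * j ≤ i) (Finset.range (n + 1))) (fun j => i - n ≤ j)]
  congr 1
  · apply Finset.sum_congr _ (fun _ _ => rfl)
    ext j
    simp only [Finset.mem_filter, Finset.mem_Icc, Finset.mem_range]
    omega
  · rw [Finset.sum_eq_zero, Finset.sum_eq_zero]
    · intro j hj
      simp only [Finset.mem_filter, Finset.mem_range] at hj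
      rw [hz j (by omega) (by omega)]; simp
    · intro j hj
      simp only [Finset.mem_filter, Finset.mem_Icc] at hj
      rw [Nat.choose_eq_zero_of_lt (by omega : n < j)]; simp

def wt1 {p : ℕ} (y : ZMod p) : ℕ := if y = 1 ∨ y = -1 then 1 else if y = 2 ∨ y = -2 then 2 else 0

lemma aux_ne {p : ℕ} (hp : 5 ≤ p) (k : ℕ) (h0 : 0 < k) (h : k < 5) : ((k : ℕ) : ZMod p) ≠ 0 := by
  rw [Ne, ZMod.natCast_eq_zero_iff]
  intro h'
  have := Nat.le_of_dvd h0 h'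
  omega

open Polynomial in
lemma aux_gen {p : ℕ} (hp : 5 ≤ p) :
    ∑ y ∈ ({0, 1, -1, 2, -2} : Finset (ZMod p)), (X : ℕ[X]) ^ wt1 y = 1 + 2 * X + 2 * X ^ 2 := by
  have e1 := aux_ne hp 1 (by norm_num) (by norm_num)
  have e2 := aux_ne hp 2 (by norm_num) (by norm_num)
  have e3 := aux_ne hp 3 (by norm_num) (by norm_num)
  have e4 := aux_ne hp 4 (by norm_num) (by norm_num)
  push_cast at e1 e2 e3 e4
  have a1 : (0 : ZMod p) ≠ 1 := fun h => e1 (by linear_combination -h)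
  have a2 : (0 : ZMod p) ≠ -1 := fun h => e1 (by linear_combination h)
  have a3 : (0 : ZMod p) ≠ 2 := fun h => e2 (by linear_combination -h)
  have a4 : (0 : ZMod p) ≠ -2 := fun h => e2 (by linear_combination h)
  have b1 : (1 : ZMod p) ≠ -1 := fun h => e2 (by linear_combination h)
  have b2 : (1 : ZMod p) ≠ 2 := fun h => e1 (by linear_combination -h)
  have b3 : (1 : ZMod p) ≠ -2 := fun h => e3 (by linear_combination h)
  have c1 : (-1 : ZMod p) ≠ 2 := fun h => e3 (by linear_combination -h)
  have c2 : (-1 : ZMod p) ≠ -2 := fun h => e1 (by linear_combination h)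
  have d1 : (2 : ZMod p) ≠ -2 := fun h => e4 (by linear_combination h)
  rw [Finset.sum_insert (by simp only [Finset.mem_insert, Finset.mem_singleton]; tauto),
    Finset.sum_insert (by simp only [Finset.mem_insert, Finset.mem_singleton]; tauto),
    Finset.sum_insert (by simp only [Finset.mem_insert, Finset.mem_singleton]; tauto),
    Finset.sum_insert (by simp only [Finset.mem_singleton]; tauto), Finset.sum_singleton]
  have w0 : wt1 (0 : ZMod p) = 0 := by unfold wt1; rw [if_neg (by tauto), if_neg (by tauto)]
  have w1 : wt1 (1 : ZMod p) = 1 := by unfold wt1; rw [if_pos (by tauto)]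
  have w2 : wt1 (-1 : ZMod p) = 1 := by unfold wt1; rw [if_pos (by tauto)]
  have w3 : wt1 (2 : ZMod p) = 2 := by
    unfold wt1; rw [if_neg (by rintro (h | h) <;> simp_all [eq_comm]), if_pos (by tauto)]
  have w4 : wt1 (-2 : ZMod p) = 2 := by
    unfold wt1; rw [if_neg (by rintro (h | h) <;> [exact b3 h.symm; exact c2 h.symm]), if_pos (by tauto)]
  rw [w0, w1, w2, w3, w4]
  ring

open Polynomial in
lemma aux_count {p : ℕ} (hp : 5 ≤ p) (n i : ℕ) :
    ((Fintype.piFinset (fun _ : Fin n => ({0, 1, -1, 2, -2} : Finset (ZMod p)))).filter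
      (fun x => restrictedWeight x = i)).card =
      ((1 + 2 * X + 2 * X ^ 2 : ℕ[X]) ^ n).coeff i := by
  have := Finset.prod_univ_sum (fun _ : Fin n => ({0, 1, -1, 2, -2} : Finset (ZMod p)))
    (fun _ y => (X : ℕ[X]) ^ wt1 y)
  simp only [aux_gen hp, Finset.prod_const, Finset.card_univ, Fintype.card_fin] at this
  rw [this, finset_sum_coeff, Finset.card_filter]
  apply Finset.sum_congr rfl
  intro x _
  rw [Finset.prod_pow_eq_pow_sum, coeff_X_pow]
  have : ∑ i, wt1 (x i) = restrictedWeight x := rfl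
  rw [this]
  simp only [eq_comm]

theorem stmt2 {p : ℕ} [Fact p.Prime] (hp : 5 ≤ p) {n t : ℕ} (hn : 1 ≤ n) (ht : t ≤ 2 * n)
    (a : Fin n → ZMod p) :
    Nat.card {x : Fin n → ZMod p |
      (∀ i, (x - a) i ∈ ({0, 1, -1, 2, -2} : Set (ZMod p))) ∧
      restrictedWeight (x - a) ≤ t} = Vtilde n t := by
  set B := Fintype.piFinset (fun _ : Fin n => ({0, 1, -1, 2, -2} : Finset (ZMod p))) with hB
  have h1 : Nat.card {x : Fin n → ZMod p |
      (∀ i, (x - a) i ∈ ({0, 1, -1, 2, -2} : Set (ZMod p))) ∧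
      restrictedWeight (x - a) ≤ t} = (B.filter (fun x => restrictedWeight x ≤ t)).card := by
    rw [← Nat.card_eq_finsetCard]
    apply Nat.card_congr
    refine (Equiv.subRight a).subtypeEquiv ?_
    intro x
    simp [hB]
  rw [h1, Finset.card_eq_sum_card_fiberwise (f := restrictedWeight) (t := Finset.range (t + 1))]
  · unfold Vtilde
    apply Finset.sum_congr rfl
    intro i hi
    rw [← aux_coeff, ← aux_count hp, Finset.filter_filter]
    congr 1
    apply Finset.filter_congr
    intro x _
    rw [Finset.mem_range] at hi
    constructor
    · exact fun h => h.2
    · exact fun h => ⟨by omega, h⟩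
  · intro x hx
    simp only [Finset.coe_filter, Set.mem_setOf_eq] at hx
    simp only [Finset.coe_range, Set.mem_Iio]
    omega
end

section
/- Let p ≥ 5 be a prime, n ≥ 1 a natural number, and d̃ ≥ 1 a natural number. There exists a linear subspace C ⊆ (ZMod p)^n such that every nonzero c ∈ C whose entries all lie in {0, 1, −1, 2, −2} has restricted weight w̃(c) ≥ d̃, and such that p^{n−1} ≤ p^{dim C} · Ṽ(n, d̃−1), where dim C is the dimension of C over ZMod p. (Equivalently, dim C ≥ n − 1 − log_p Ṽ(n, d̃−1).) -/
def ballFin (p n t : ℕ) [NeZero p] : Finset (Fin n → ZMod p) :=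
  (Finset.range (t + 1)).biUnion fun i => (Finset.Icc (i - n) (i / 2)).biUnion fun j =>
    (Finset.powersetCard j (Finset.univ : Finset (Fin n))).biUnion fun T2 =>
      (Finset.powersetCard (i - 2 * j) T2ᶜ).biUnion fun T1 =>
        Fintype.piFinset fun k =>
          if k ∈ T2 then ({2, -2} : Finset (ZMod p)) else if k ∈ T1 then {1, -1} else {0}

theorem ballFin_card (p n t : ℕ) [NeZero p] : (ballFin p n t).card ≤ Vtilde n t := by
  unfold ballFin Vtilde
  refine Finset.card_biUnion_le.trans (Finset.sum_le_sum fun i hi => ?_)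
  refine Finset.card_biUnion_le.trans (Finset.sum_le_sum fun j hj => ?_)
  rw [mul_assoc]
  have h0 : (Finset.powersetCard j (Finset.univ : Finset (Fin n))).card = n.choose j := by simp
  rw [← h0]
  refine Finset.card_biUnion_le_card_mul _ _ _ fun T2 hT2 => ?_
  rw [Finset.mem_powersetCard] at hT2
  have h1 : (Finset.powersetCard (i - 2 * j) T2ᶜ).card = (n - j).choose (i - 2 * j) := by
    simp [Finset.card_compl, hT2.2]
  rw [← h1]
  refine Finset.card_biUnion_le_card_mul _ _ _ fun T1 hT1 => ?_
  rw [Finset.mem_powersetCard] at hT1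
  rw [Finset.mem_Icc] at hj
  have hdisj : Disjoint T1 T2 := Finset.subset_compl_iff_disjoint_right.mp hT1.1
  have hc : (T1 ∪ T2).card = i - j := by
    rw [Finset.card_union_of_disjoint hdisj, hT1.2, hT2.2]; omega
  rw [Fintype.card_piFinset]
  calc _ ≤ ∏ k : Fin n, (if k ∈ T1 ∪ T2 then 2 else 1) := by
        refine Finset.prod_le_prod' fun k _ => ?_
        by_cases h2 : k ∈ T2
        · simpa [h2] using Finset.card_le_two
        · by_cases h3 : k ∈ T1
          · simpa [h2, h3] using Finset.card_le_two
          · simp [h2, h3]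
    _ = 2 ^ (i - j) := by
        rw [Finset.prod_ite_mem, Finset.univ_inter, Finset.prod_const, hc]

theorem mem_ballFin {p n t : ℕ} [NeZero p] (x : Fin n → ZMod p)
    (hx : ∀ i, x i ∈ ({0, 1, -1, 2, -2} : Set (ZMod p))) (hw : restrictedWeight x ≤ t) :
    x ∈ ballFin p n t := by
  classical
  set T1 : Finset (Fin n) := Finset.univ.filter fun k => x k = 1 ∨ x k = -1 with hT1
  set T2 : Finset (Fin n) :=
    Finset.univ.filter fun k => ¬ (x k = 1 ∨ x k = -1) ∧ (x k = 2 ∨ x k = -2) with hT2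
  have hd : Disjoint T1 T2 := by
    rw [Finset.disjoint_left]; intro k h1 h2
    simp only [hT1, hT2, Finset.mem_filter] at h1 h2
    exact h2.2.1 h1.2
  have hwt : restrictedWeight x = T1.card + 2 * T2.card := by
    unfold restrictedWeight
    rw [hT1, hT2, Finset.card_filter, Finset.card_filter, Finset.mul_sum,
      ← Finset.sum_add_distrib]
    refine Finset.sum_congr rfl fun k _ => ?_
    split_ifs <;> simp_all
  have hn : T1.card + T2.card ≤ n := by
    rw [← Finset.card_union_of_disjoint hd]
    simpa using Finset.card_le_univ (T1 ∪ T2)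
  unfold ballFin
  simp only [Finset.mem_biUnion, Finset.mem_range, Finset.mem_Icc, Finset.mem_powersetCard,
    Fintype.mem_piFinset]
  refine ⟨T1.card + 2 * T2.card, by omega, T2.card, by omega, T2, ⟨Finset.subset_univ _, rfl⟩,
    T1, ⟨Finset.subset_compl_iff_disjoint_right.mpr hd, by omega⟩, fun k => ?_⟩
  have := hx k
  simp only [Set.mem_insert_iff, Set.mem_singleton_iff] at this
  by_cases h2 : k ∈ T2
  · rw [if_pos h2]
    simp only [hT2, Finset.mem_filter] at h2
    simpa using h2.2.2
  · rw [if_neg h2]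
    by_cases h1 : k ∈ T1
    · rw [if_pos h1]
      simp only [hT1, Finset.mem_filter] at h1
      simpa using h1.2
    · rw [if_neg h1]
      simp only [hT1, hT2, Finset.mem_filter, Finset.mem_univ, true_and] at h1 h2
      simp only [Finset.mem_singleton]
      tauto

theorem stmt3 {p : ℕ} [Fact p.Prime] (hp : 5 ≤ p) {n d : ℕ} (hn : 1 ≤ n) (hd : 1 ≤ d) :
    ∃ C : Submodule (ZMod p) (Fin n → ZMod p),
      (∀ c ∈ C, c ≠ 0 → (∀ i, c i ∈ ({0, 1, -1, 2, -2} : Set (ZMod p))) →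
        d ≤ restrictedWeight c) ∧
      p ^ (n - 1) ≤ p ^ (Module.finrank (ZMod p) C) * Vtilde n (d - 1) := by
  classical
  let S : Set (Submodule (ZMod p) (Fin n → ZMod p)) := {C | ∀ c ∈ C, c ≠ 0 →
    (∀ i, c i ∈ ({0, 1, -1, 2, -2} : Set (ZMod p))) → d ≤ restrictedWeight c}
  have hS : S.Nonempty := ⟨⊥, fun c hc h0 => absurd ((Submodule.mem_bot _).mp hc) h0⟩
  obtain ⟨C, hC⟩ := (Set.toFinite S).exists_maximal hS
  refine ⟨C, hC.1, ?_⟩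
  have hsurj : Function.Surjective (fun q : C × ZMod p × ballFin p n (d - 1) =>
      ((q.1 : Fin n → ZMod p) + q.2.1 • (q.2.2 : Fin n → ZMod p))) := by
    intro v
    by_cases hv : v ∈ C
    · refine ⟨⟨⟨v, hv⟩, 0, ⟨0, mem_ballFin 0 (by simp) ?_⟩⟩, by simp⟩
      have : restrictedWeight (0 : Fin n → ZMod p) = 0 := by
        have h2 : (2 : ZMod p) ≠ 0 := by
          intro h
          have : ((2 : ℕ) : ZMod p) = 0 := by exact_mod_cast h
          rw [ZMod.natCast_eq_zero_iff] at this
          exact absurd (Nat.le_of_dvd (by norm_num) this) (by omega)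
        simp [restrictedWeight, h2, h2.symm]
      omega
    · have hnot : C ⊔ Submodule.span (ZMod p) {v} ∉ S := by
        intro h
        exact hv (hC.2 h le_sup_left (Submodule.mem_sup_right (Submodule.mem_span_singleton_self v)))
      simp only [S, Set.mem_ofPred_eq] at hnot
      push Not at hnot
      obtain ⟨b, hb, hb0, hbr, hbw⟩ := hnot
      obtain ⟨c, hc, y, hy, rfl⟩ := Submodule.mem_sup.mp hb
      obtain ⟨a, rfl⟩ := Submodule.mem_span_singleton.mp hy
      have ha : a ≠ 0 := by
        rintro rfl
        simp only [zero_smul, add_zero] at hb0 hbr hbw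
        exact absurd (hC.1 c hc hb0 hbr) (by omega)
      refine ⟨⟨⟨-(a⁻¹ • c), C.neg_mem (C.smul_mem _ hc)⟩, a⁻¹,
        ⟨c + a • v, mem_ballFin _ hbr (by omega)⟩⟩, ?_⟩
      simp [smul_smul, ha]
  have hcard := Fintype.card_le_of_surjective _ hsurj
  have hCc : Fintype.card C = p ^ Module.finrank (ZMod p) C := by
    rw [Module.card_eq_pow_finrank (K := ZMod p), ZMod.card]
  simp only [Fintype.card_prod, Fintype.card_pi, ZMod.card, Finset.prod_const, Finset.card_univ,
    Fintype.card_fin, Fintype.card_coe, hCc] at hcard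
  have hV := ballFin_card p n (d - 1)
  have hp0 : 0 < p := by omega
  refine le_of_mul_le_mul_left ?_ hp0
  calc p * p ^ (n - 1) = p ^ n := by rw [← pow_succ', Nat.sub_add_cancel hn]
    _ ≤ _ := hcard
    _ ≤ p ^ Module.finrank (ZMod p) C * (p * Vtilde n (d - 1)) := by gcongr
    _ = _ := by ring
end

section
/- Let p ≥ 5 be a prime, n ≥ 1 and d̃ ≥ 1 natural numbers. Say that a linear subspace C ⊆ (ZMod p)^n is d̃-good if every nonzero c ∈ C whose entries all lie in {0, 1, −1, 2, −2} has restricted weight w̃(c) ≥ d̃. Suppose C is a d̃-good subspace whose dimension is maximal among all d̃-good subspaces of (ZMod p)^n. Then for every vector x ∈ (ZMod p)^n there exist a nonzero scalar α ∈ (ZMod p)^× and a codeword c ∈ C such that every entry of α·x − c lies in {0, 1, −1, 2, −2} and w̃(α·x − c) ≤ d̃ − 1. -/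
/-- A subspace is `d`-good if every nonzero codeword with all entries in `{0, ±1, ±2}`
has restricted weight at least `d`. -/
def IsGood {p n : ℕ} (d : ℕ) (C : Submodule (ZMod p) (Fin n → ZMod p)) : Prop :=
  ∀ c ∈ C, c ≠ 0 → (∀ i, c i ∈ ({0, 1, -1, 2, -2} : Set (ZMod p))) → d ≤ restrictedWeight c

theorem stmt4 {p : ℕ} [Fact p.Prime] (hp : 5 ≤ p) {n d : ℕ} (hn : 1 ≤ n) (hd : 1 ≤ d)
    (C : Submodule (ZMod p) (Fin n → ZMod p)) (hC : IsGood d C)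
    (hmax : ∀ D : Submodule (ZMod p) (Fin n → ZMod p), IsGood d D →
      Module.finrank (ZMod p) D ≤ Module.finrank (ZMod p) C) :
    ∀ x : Fin n → ZMod p, ∃ (α : (ZMod p)ˣ) (c : Fin n → ZMod p), c ∈ C ∧
      (∀ i, ((α : ZMod p) • x - c) i ∈ ({0, 1, -1, 2, -2} : Set (ZMod p))) ∧
      restrictedWeight ((α : ZMod p) • x - c) ≤ d - 1 := by
  intro x
  by_cases hx : x ∈ C
  · refine ⟨1, x, hx, ?_, ?_⟩
    · intro i
      simp
    · have h2 : (2 : ZMod p) ≠ 0 := by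
        intro h
        have h' : ((2 : ℕ) : ZMod p) = 0 := by exact_mod_cast h
        rw [ZMod.natCast_eq_zero_iff] at h'
        have := Nat.le_of_dvd (by norm_num) h'
        omega
      have : restrictedWeight (((1 : (ZMod p)ˣ) : ZMod p) • x - x) = 0 := by
        unfold restrictedWeight
        apply Finset.sum_eq_zero
        intro i _
        simp [h2.symm, eq_comm (a := (0 : ZMod p)), h2]
      omega
  · have hlt : C < C ⊔ Submodule.span (ZMod p) {x} := by
      refine lt_of_le_of_ne le_sup_left ?_
      intro h
      apply hx
      rw [h]
      exact Submodule.mem_sup_right (Submodule.mem_span_singleton_self x)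
    have hfr := Submodule.finrank_lt_finrank_of_lt hlt
    have hng : ¬ IsGood d (C ⊔ Submodule.span (ZMod p) {x}) := fun h =>
      absurd (hmax _ h) (not_le.mpr hfr)
    unfold IsGood at hng
    push Not at hng
    obtain ⟨e, he, he0, hent, hw⟩ := hng
    obtain ⟨c, hc, z, hz, rfl⟩ := Submodule.mem_sup.mp he
    obtain ⟨a, rfl⟩ := Submodule.mem_span_singleton.mp hz
    have ha : a ≠ 0 := by
      rintro rfl
      simp only [zero_smul, add_zero] at he0 hent hw
      exact absurd (hC c hc he0 hent) (not_le.mpr hw)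
    have heq : ((Units.mk0 a ha : (ZMod p)ˣ) : ZMod p) • x - (-c) = c + a • x := by
      rw [Units.val_mk0, sub_neg_eq_add, add_comm]
    refine ⟨Units.mk0 a ha, -c, C.neg_mem hc, ?_, ?_⟩
    · rw [heq]; exact hent
    · rw [heq]; omega
end

section
/- Let p > 5 be a prime, let ε be a real number with 0 < ε < 1 − log_p 5, and let k, n be positive integers with k ≤ n·(1 − log_p 5 − ε). Then the number of k×n matrices G over ZMod p for which there exists a nonzero x ∈ (ZMod p)^k such that every entry of x·G lies in {0, 1, −1, 2, −2} is at most p^{kn} · p^{−εn}. Consequently, a uniformly random k×n matrix over ZMod p generates a code containing no nonzero codeword with all entries in {0, 1, −1, 2, −2} with probability at least 1 − p^{−εn}. -/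
lemma bad_x_card {p : ℕ} [Fact p.Prime] {k n : ℕ} (x : Fin k → ZMod p) (hx : x ≠ 0) :
    Nat.card {G : Matrix (Fin k) (Fin n) (ZMod p) |
      ∀ j, Matrix.vecMul x G j ∈ ({0, 1, -1, 2, -2} : Set (ZMod p))}
      ≤ 5 ^ n * (p ^ n) ^ (k - 1) := by
  classical
  obtain ⟨i, hi⟩ := Function.ne_iff.mp hx
  have hi' : x i ≠ 0 := hi
  let S : Finset (ZMod p) := {0, 1, -1, 2, -2}
  have hS : S.card ≤ 5 := Finset.card_le_five
  let f : {G : Matrix (Fin k) (Fin n) (ZMod p) |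
      ∀ j, Matrix.vecMul x G j ∈ ({0, 1, -1, 2, -2} : Set (ZMod p))} →
      (Fin n → S) × ({r : Fin k // r ≠ i} → Fin n → ZMod p) := fun G =>
    (fun j => ⟨Matrix.vecMul x G.1 j, by
      have := G.2 j
      simpa [S] using this⟩, fun r j => G.1 r.1 j)
  have hf : Function.Injective f := by
    rintro ⟨G, hG⟩ ⟨H, hH⟩ h
    have h1 : ∀ j, Matrix.vecMul x G j = Matrix.vecMul x H j := fun j =>
      congrArg Subtype.val (congrFun (congrArg Prod.fst h) j)
    have h2 : ∀ r, r ≠ i → ∀ j, G r j = H r j := fun r hr j =>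
      congrFun (congrFun (congrArg Prod.snd h) ⟨r, hr⟩) j
    apply Subtype.ext
    ext r j
    by_cases hr : r = i
    · subst hr
      have h3 := h1 j
      simp only [Matrix.vecMul, dotProduct] at h3
      rw [← Finset.add_sum_erase _ _ (Finset.mem_univ r),
        ← Finset.add_sum_erase _ (fun s => x s * H s j) (Finset.mem_univ r),
        Finset.sum_congr rfl (fun s hs => by
          rw [h2 s (Finset.ne_of_mem_erase hs) j])] at h3
      exact mul_left_cancel₀ hi' (add_right_cancel h3)
    · exact h2 r hr j
  have := Nat.card_le_card_of_injective f hf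
  refine this.trans ?_
  have hc : Nat.card ((Fin n → S) × ({r : Fin k // r ≠ i} → Fin n → ZMod p))
      = S.card ^ n * (p ^ n) ^ (k - 1) := by
    simp [Nat.card_eq_fintype_card, ZMod.card]
  rw [hc]
  gcongr

lemma bad_card {p : ℕ} [Fact p.Prime] {k n : ℕ} :
    Nat.card {G : Matrix (Fin k) (Fin n) (ZMod p) |
        ∃ x : Fin k → ZMod p, x ≠ 0 ∧
          ∀ j, Matrix.vecMul x G j ∈ ({0, 1, -1, 2, -2} : Set (ZMod p))}
      ≤ p ^ k * (5 ^ n * (p ^ n) ^ (k - 1)) := by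
  classical
  let B : (Fin k → ZMod p) → Finset (Matrix (Fin k) (Fin n) (ZMod p)) := fun x =>
    Finset.univ.filter (fun G => x ≠ 0 ∧
      ∀ j, Matrix.vecMul x G j ∈ ({0, 1, -1, 2, -2} : Set (ZMod p)))
  have hB : ∀ x, (B x).card ≤ 5 ^ n * (p ^ n) ^ (k - 1) := by
    intro x
    by_cases hx : x = 0
    · simp [B, hx]
    · refine le_trans (le_of_eq ?_) (bad_x_card x hx)
      rw [Nat.card_coe_set_eq, ← Set.ncard_coe_finset]
      congr 1
      ext G
      simp [B, hx]
  rw [Nat.card_coe_set_eq]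
  have : {G : Matrix (Fin k) (Fin n) (ZMod p) |
        ∃ x : Fin k → ZMod p, x ≠ 0 ∧
          ∀ j, Matrix.vecMul x G j ∈ ({0, 1, -1, 2, -2} : Set (ZMod p))}
      = ((Finset.univ.biUnion B : Finset _) : Set (Matrix (Fin k) (Fin n) (ZMod p))) := by
    ext G
    simp [B]
  rw [this, Set.ncard_coe_finset]
  refine (Finset.card_biUnion_le_card_mul _ _ _ (fun x _ => hB x)).trans (le_of_eq ?_)
  simp [ZMod.card]

theorem stmt6 {p : ℕ} [Fact p.Prime] (hp : 5 < p) {k n : ℕ} (hk : 0 < k) (hn : 0 < n)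
    {ε : ℝ} (hε : 0 < ε) (hε' : ε < 1 - Real.logb p 5)
    (hkn : (k : ℝ) ≤ (n : ℝ) * (1 - Real.logb p 5 - ε)) :
    (Nat.card {G : Matrix (Fin k) (Fin n) (ZMod p) |
        ∃ x : Fin k → ZMod p, x ≠ 0 ∧
          ∀ j, Matrix.vecMul x G j ∈ ({0, 1, -1, 2, -2} : Set (ZMod p))} : ℝ)
      ≤ (p : ℝ) ^ (k * n) * (p : ℝ) ^ (-(ε * n)) ∧
    1 - (p : ℝ) ^ (-(ε * n)) ≤
      (Nat.card {G : Matrix (Fin k) (Fin n) (ZMod p) |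
        ∀ x : Fin k → ZMod p,
          (∀ j, Matrix.vecMul x G j ∈ ({0, 1, -1, 2, -2} : Set (ZMod p))) →
          Matrix.vecMul x G = 0} : ℝ) / (p : ℝ) ^ (k * n) := by
  have hp0 : (0 : ℝ) < p := by exact_mod_cast (by omega : 0 < p)
  have hp1 : (1 : ℝ) < p := by exact_mod_cast (by omega : 1 < p)
  have hA : (Nat.card {G : Matrix (Fin k) (Fin n) (ZMod p) |
        ∃ x : Fin k → ZMod p, x ≠ 0 ∧
          ∀ j, Matrix.vecMul x G j ∈ ({0, 1, -1, 2, -2} : Set (ZMod p))} : ℝ)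
      ≤ (p : ℝ) ^ (k * n) * (p : ℝ) ^ (-(ε * n)) := by
    have h := bad_card (p := p) (k := k) (n := n)
    have h' : (Nat.card {G : Matrix (Fin k) (Fin n) (ZMod p) |
        ∃ x : Fin k → ZMod p, x ≠ 0 ∧
          ∀ j, Matrix.vecMul x G j ∈ ({0, 1, -1, 2, -2} : Set (ZMod p))} : ℝ)
      ≤ (p : ℝ) ^ k * (5 ^ n * ((p : ℝ) ^ n) ^ (k - 1)) := by exact_mod_cast h
    refine h'.trans ?_
    have h5 : (5 : ℝ) ^ n = (p : ℝ) ^ (Real.logb p 5 * n) := by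
      rw [Real.rpow_mul hp0.le, Real.rpow_logb hp0 hp1.ne' (by norm_num), Real.rpow_natCast]
    rw [h5, ← pow_mul, ← Real.rpow_natCast, ← Real.rpow_natCast, ← Real.rpow_natCast,
      ← Real.rpow_add hp0, ← Real.rpow_add hp0, ← Real.rpow_add hp0]
    apply Real.rpow_le_rpow_of_exponent_le hp1.le
    push_cast [Nat.cast_sub (show 1 ≤ k from hk)]
    nlinarith
  refine ⟨hA, ?_⟩
  rw [le_div_iff₀ (by positivity)]
  have hcov : p ^ (k * n) ≤ Nat.card {G : Matrix (Fin k) (Fin n) (ZMod p) |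
        ∃ x : Fin k → ZMod p, x ≠ 0 ∧
          ∀ j, Matrix.vecMul x G j ∈ ({0, 1, -1, 2, -2} : Set (ZMod p))} +
      Nat.card {G : Matrix (Fin k) (Fin n) (ZMod p) |
        ∀ x : Fin k → ZMod p,
          (∀ j, Matrix.vecMul x G j ∈ ({0, 1, -1, 2, -2} : Set (ZMod p))) →
          Matrix.vecMul x G = 0} := by
    have hu : Nat.card (Matrix (Fin k) (Fin n) (ZMod p)) = p ^ (k * n) := by
      change Nat.card (Fin k → Fin n → ZMod p) = _
      simp [Nat.card_eq_fintype_card, ZMod.card, ← pow_mul, mul_comm]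
    rw [← hu, ← Set.ncard_univ, Nat.card_coe_set_eq, Nat.card_coe_set_eq]
    refine le_trans (Set.ncard_le_ncard ?_ (Set.toFinite _)) (Set.ncard_union_le _ _)
    intro G _
    by_cases hG : ∃ x : Fin k → ZMod p, x ≠ 0 ∧
          ∀ j, Matrix.vecMul x G j ∈ ({0, 1, -1, 2, -2} : Set (ZMod p))
    · exact Or.inl hG
    · right
      intro x hx
      by_cases h0 : x = 0
      · simp [h0]
      · exact absurd ⟨x, h0, hx⟩ hG
  have hcov' := (Nat.cast_le (α := ℝ)).mpr hcov
  rw [Nat.cast_add, Nat.cast_pow] at hcov'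
  linarith
end

section
/- Let q be an odd prime, a a positive integer with a ≤ (q−1)/2, and n, r, v positive integers. Let H be an r×n matrix over ZMod q with columns h_0, …, h_{n−1}, let u = (u_0, …, u_{v−1}) be a vector of nonzero elements of ZMod q, and let H′ be the r×(n·v) matrix whose column with index i·v + j equals u_j · h_i for i ∈ [0, n−1], j ∈ [0, v−1]. Let s ∈ (ZMod q)^r. Then for every vector e′ ∈ (ZMod q)^{nv} such that every entry of e′ lies in {0, ±1, ±2, …, ±a} (as elements of ZMod q) and H′·e′ᵀ = s, the vector e ∈ (ZMod q)^n defined by e_i = Σ_{j=0}^{v−1} e′_{iv+j} · u_j satisfies H·eᵀ = s and wt_H(e) ≤ wt_H(e′). -/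
/-- The set `{0, ±1, ±2, …, ±a} ⊆ ZMod q`. -/
def restrictedSet (q a : ℕ) : Set (ZMod q) :=
  {x | ∃ y : ℕ, y ≤ a ∧ (x = (y : ZMod q) ∨ x = -(y : ZMod q))}

theorem stmt7 {q : ℕ} [Fact q.Prime] (hodd : Odd q) {a : ℕ} (ha : 1 ≤ a)
    (ha' : a ≤ (q - 1) / 2) {n r v : ℕ} (hn : 0 < n) (hr : 0 < r) (hv : 0 < v)
    (H : Matrix (Fin r) (Fin n) (ZMod q)) (u : Fin v → ZMod q) (hu : ∀ j, u j ≠ 0)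
    (H' : Matrix (Fin r) (Fin n × Fin v) (ZMod q))
    (hH' : ∀ (row : Fin r) (i : Fin n) (j : Fin v), H' row (i, j) = u j * H row i)
    (s : Fin r → ZMod q) (e' : Fin n × Fin v → ZMod q)
    (he'res : ∀ l, e' l ∈ restrictedSet q a)
    (he's : H'.mulVec e' = s) :
    H.mulVec (fun i => ∑ j, e' (i, j) * u j) = s ∧
    hammingNorm (fun i => ∑ j, e' (i, j) * u j) ≤ hammingNorm e' := by
  constructor
  · rw [← he's]
    funext k
    simp only [Matrix.mulVec, dotProduct, Fintype.sum_prod_type, hH', Finset.mul_sum]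
    refine Finset.sum_congr rfl fun i _ => Finset.sum_congr rfl fun j _ => ?_
    ring
  · classical
    unfold hammingNorm
    refine (Finset.card_le_card ?_).trans
      (Finset.card_image_le (s := Finset.univ.filter fun l => e' l ≠ 0) (f := Prod.fst))
    intro i hi
    simp only [Finset.mem_filter, Finset.mem_univ, true_and] at hi
    obtain ⟨j, _, hj⟩ := Finset.exists_ne_zero_of_sum_ne_zero hi
    refine Finset.mem_image.2 ⟨(i, j), ?_, rfl⟩
    simp only [Finset.mem_filter, Finset.mem_univ, true_and]
    exact left_ne_zero_of_mul hj
end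

section
/- Let q be an odd prime, a a positive integer with a ≤ (q−1)/2, and n, r, v positive integers. Let H be an r×n matrix over ZMod q with columns h_0, …, h_{n−1}, let u = (u_0, …, u_{v−1}) be a vector of nonzero elements of ZMod q, and let H′ be the r×(n·v) matrix whose column with index i·v + j equals u_j · h_i. Assume the covering property: for every nonzero b ∈ ZMod q there exist j ∈ [0, v−1] and an integer y with 1 ≤ y ≤ a such that b = y·u_j or b = −y·u_j (computed in ZMod q). Then for every e ∈ (ZMod q)^n and s ∈ (ZMod q)^r with H·eᵀ = s, there exists e′ ∈ (ZMod q)^{nv} such that every entry of e′ lies in {0, ±1, ±2, …, ±a}, wt_H(e′) = wt_H(e), and H′·e′ᵀ = s. -/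
theorem stmt8 {q : ℕ} [Fact q.Prime] (hodd : Odd q) {a : ℕ} (ha : 1 ≤ a)
    (ha' : a ≤ (q - 1) / 2) {n r v : ℕ} (hn : 0 < n) (hr : 0 < r) (hv : 0 < v)
    (H : Matrix (Fin r) (Fin n) (ZMod q)) (u : Fin v → ZMod q) (hu : ∀ j, u j ≠ 0)
    (H' : Matrix (Fin r) (Fin n × Fin v) (ZMod q))
    (hH' : ∀ (row : Fin r) (i : Fin n) (j : Fin v), H' row (i, j) = u j * H row i)
    (hcov : ∀ b : ZMod q, b ≠ 0 → ∃ (j : Fin v) (y : ℕ), 1 ≤ y ∧ y ≤ a ∧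
      (b = (y : ZMod q) * u j ∨ b = -((y : ZMod q) * u j))) :
    ∀ (e : Fin n → ZMod q) (s : Fin r → ZMod q), H.mulVec e = s →
      ∃ e' : Fin n × Fin v → ZMod q,
        (∀ l, e' l ∈ restrictedSet q a) ∧
        hammingNorm e' = hammingNorm e ∧
        H'.mulVec e' = s := by
  classical
  intro e s hs
  have key : ∀ b : ZMod q, ∃ (j : Fin v) (c : ZMod q), c ∈ restrictedSet q a ∧ b = c * u j := by
    intro b
    by_cases hb : b = 0
    · exact ⟨⟨0, hv⟩, 0, ⟨0, Nat.zero_le _, Or.inl (by simp)⟩, by simp [hb]⟩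
    · obtain ⟨j, y, _, hy, h | h⟩ := hcov b hb
      · exact ⟨j, y, ⟨y, hy, Or.inl rfl⟩, h⟩
      · exact ⟨j, -y, ⟨y, hy, Or.inr rfl⟩, by rw [h]; ring⟩
  choose J c hc hb using key
  have hc0 : ∀ b, c b ≠ 0 ↔ b ≠ 0 := by
    intro b
    have h1 := hb b
    have h2 := hu (J b)
    constructor
    · intro h h0
      rw [h0] at h1 h h2
      exact mul_ne_zero h h2 h1.symm
    · intro h h0
      apply h
      rw [h1, h0, zero_mul]
  refine ⟨fun l => if l.2 = J (e l.1) then c (e l.1) else 0, ?_, ?_, ?_⟩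
  · intro l
    dsimp only
    split_ifs
    · exact hc _
    · exact ⟨0, Nat.zero_le _, Or.inl (by simp)⟩
  · unfold hammingNorm
    symm
    apply Finset.card_bij (fun i _ => (i, J (e i)))
    · intro i hi
      simpa [hc0] using hi
    · intro i _ k _ h
      exact (Prod.mk.inj h).1
    · rintro ⟨i, j⟩ h
      simp only [Finset.mem_filter, Finset.mem_univ, true_and, ne_eq, ite_eq_right_iff,
        Classical.not_imp] at h
      exact ⟨i, by simpa using (hc0 _).1 h.2, by rw [h.1]⟩
  · rw [← hs]
    funext row
    simp only [Matrix.mulVec, dotProduct, Fintype.sum_prod_type, hH', mul_ite, mul_zero,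
      Finset.sum_ite_eq', Finset.sum_ite_eq, Finset.mem_univ, if_true]
    refine Finset.sum_congr rfl fun i _ => ?_
    conv_rhs => rw [hb (e i)]
    ring
end

section
/- Let q be an odd prime, a a positive integer with a ≤ (q−1)/2, and n, r, v, t positive integers. Let H be an r×n matrix over ZMod q with columns h_0, …, h_{n−1}, let u = (u_0, …, u_{v−1}) be a vector of nonzero elements of ZMod q satisfying the covering property (for every nonzero b ∈ ZMod q there exist j ∈ [0, v−1] and an integer y with 1 ≤ y ≤ a such that b = y·u_j or b = −y·u_j in ZMod q), and let H′ be the r×(n·v) matrix whose column with index i·v + j equals u_j · h_i. Then for every s ∈ (ZMod q)^r: there exists e ∈ (ZMod q)^n with wt_H(e) ≤ t and H·eᵀ = s if and only if there exists e′ ∈ (ZMod q)^{nv} with every entry in {0, ±1, ±2, …, ±a}, wt_H(e′) ≤ t, and H′·e′ᵀ = s. -/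
theorem stmt9 {q : ℕ} [Fact q.Prime] (hodd : Odd q) {a : ℕ} (ha : 1 ≤ a)
    (ha' : a ≤ (q - 1) / 2) {n r v t : ℕ} (hn : 0 < n) (hr : 0 < r) (hv : 0 < v) (ht : 0 < t)
    (H : Matrix (Fin r) (Fin n) (ZMod q)) (u : Fin v → ZMod q) (hu : ∀ j, u j ≠ 0)
    (hcov : ∀ b : ZMod q, b ≠ 0 → ∃ (j : Fin v) (y : ℕ), 1 ≤ y ∧ y ≤ a ∧
      (b = (y : ZMod q) * u j ∨ b = -((y : ZMod q) * u j)))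
    (H' : Matrix (Fin r) (Fin n × Fin v) (ZMod q))
    (hH' : ∀ (row : Fin r) (i : Fin n) (j : Fin v), H' row (i, j) = u j * H row i)
    (s : Fin r → ZMod q) :
    (∃ e : Fin n → ZMod q, hammingNorm e ≤ t ∧ H.mulVec e = s) ↔
    (∃ e' : Fin n × Fin v → ZMod q,
      (∀ l, e' l ∈ restrictedSet q a) ∧ hammingNorm e' ≤ t ∧ H'.mulVec e' = s) := by
  constructor
  · rintro ⟨e, he, hs⟩
    have key : ∀ b : ZMod q, ∃ (j : Fin v) (z : ZMod q), z ∈ restrictedSet q a ∧ z * u j = b := by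
      intro b
      by_cases hb : b = 0
      · exact ⟨⟨0, hv⟩, 0, ⟨0, Nat.zero_le _, by simp⟩, by simp [hb]⟩
      · obtain ⟨j, y, _, hy, h | h⟩ := hcov b hb
        · exact ⟨j, y, ⟨y, hy, Or.inl rfl⟩, h.symm⟩
        · exact ⟨j, -y, ⟨y, hy, Or.inr rfl⟩, by rw [h, neg_mul]⟩
    choose J z hz hJ using key
    refine ⟨fun l => if l.2 = J (e l.1) then z (e l.1) else 0, ?_, ?_, ?_⟩
    · intro l
      dsimp only
      split_ifs
      · exact hz _
      · exact ⟨0, Nat.zero_le _, by simp⟩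
    · refine le_trans ?_ he
      unfold hammingNorm
      refine Finset.card_le_card_of_injOn Prod.fst ?_ ?_
      · rintro ⟨i, j⟩ h
        simp only [Finset.coe_filter, Finset.mem_univ, true_and, Set.mem_setOf_eq, ne_eq,
          ite_eq_right_iff, Classical.not_imp] at h ⊢
        intro h0
        have := hJ (e i)
        rw [h0] at this h
        rcases mul_eq_zero.mp this with h1 | h1
        · exact h.2 h1
        · exact hu _ h1
      · rintro ⟨i, j⟩ h ⟨i', j'⟩ h' hii
        simp only [Finset.coe_filter, Finset.mem_univ, true_and, Set.mem_setOf_eq, ne_eq,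
          ite_eq_right_iff, Classical.not_imp] at h h' hii
        subst hii
        rw [h.1, h'.1]
    · rw [← hs]
      ext row
      simp only [Matrix.mulVec, dotProduct, Fintype.sum_prod_type, hH']
      refine Finset.sum_congr rfl fun i _ => ?_
      simp only [mul_ite, mul_zero, Finset.sum_ite_eq', Finset.sum_ite_eq, Finset.mem_univ, if_true]
      conv_rhs => rw [← hJ (e i)]
      ring
  · rintro ⟨e', -, he, hs⟩
    refine ⟨fun i => ∑ j, e' (i, j) * u j, ?_, ?_⟩
    · refine le_trans ?_ he
      unfold hammingNorm
      refine le_trans (Finset.card_le_card ?_) (Finset.card_image_le (f := Prod.fst))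
      intro i hi
      simp only [Finset.mem_filter, Finset.mem_univ, true_and] at hi
      obtain ⟨j, _, hj⟩ := Finset.exists_ne_zero_of_sum_ne_zero hi
      simp only [Finset.mem_image, Finset.mem_filter, Finset.mem_univ, true_and]
      exact ⟨(i, j), left_ne_zero_of_mul hj, rfl⟩
    · rw [← hs]
      ext row
      simp only [Matrix.mulVec, dotProduct, Fintype.sum_prod_type, hH', Finset.mul_sum]
      refine Finset.sum_congr rfl fun i _ => Finset.sum_congr rfl fun j _ => ?_
      ring
end

section
/- Let p ≥ 5 be a prime and n, k positive integers with k ≤ n. Let H be an (n−k)×n matrix over ZMod p, let e ∈ (ZMod p)^n have every entry in {0, 1, −1}, and set s = H·eᵀ. Let σ be a permutation of {0, …, n−1}, let v ∈ {1, −1}^n, and define the signed monomial map τ : (ZMod p)^n → (ZMod p)^n by τ(a)_i = v_{σ(i)} · a_{σ(i)}. Then for every u ∈ (ZMod p)^n and every nonzero z ∈ ZMod p, setting y = τ(u + z·e): (i) H·(τ^{−1}(y))ᵀ − z·s = H·uᵀ; (ii) y − z·τ(e) = τ(u); (iii) every entry of τ(e) lies in {0, 1, −1} and the Hamming weight of τ(e)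 equals the Hamming weight of e. (This establishes that an honest prover in the restricted-error CVE identification scheme passes verification for both challenge values b = 0 and b = 1.) -/
theorem stmt12 {p : ℕ} [Fact p.Prime] (hp : 5 ≤ p) {n k : ℕ} (hk : 0 < k) (hkn : k ≤ n)
    (H : Matrix (Fin (n - k)) (Fin n) (ZMod p))
    (e : Fin n → ZMod p) (he : ∀ i, e i ∈ ({0, 1, -1} : Set (ZMod p)))
    (s : Fin (n - k) → ZMod p) (hs : s = H.mulVec e)
    (σ : Equiv.Perm (Fin n)) (v : Fin n → ZMod p) (hv : ∀ i, v i = 1 ∨ v i = -1)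
    (τ : (Fin n → ZMod p) → (Fin n → ZMod p))
    (hτ : ∀ a i, τ a i = v (σ i) * a (σ i))
    (τinv : (Fin n → ZMod p) → (Fin n → ZMod p))
    (hinv1 : Function.LeftInverse τinv τ) (hinv2 : Function.RightInverse τinv τ) :
    ∀ (u : Fin n → ZMod p) (z : ZMod p), z ≠ 0 →
      H.mulVec (τinv (τ (u + z • e))) - z • s = H.mulVec u ∧
      τ (u + z • e) - z • τ e = τ u ∧
      (∀ i, τ e i ∈ ({0, 1, -1} : Set (ZMod p))) ∧
      hammingNorm (τ e) = hammingNorm e := by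
  intro u z _
  refine ⟨?_, ?_, ?_, ?_⟩
  · rw [hinv1, hs, Matrix.mulVec_add, Matrix.mulVec_smul, add_sub_cancel_right]
  · funext i
    simp only [Pi.sub_apply, Pi.smul_apply, Pi.add_apply, hτ, smul_eq_mul]
    ring
  · intro i
    rw [hτ]
    have h := he (σ i)
    simp only [Set.mem_insert_iff, Set.mem_singleton_iff] at h ⊢
    rcases hv (σ i) with h1 | h1 <;> rcases h with h | h | h <;> simp [h1, h]
  · have key : ∀ i, τ e i ≠ 0 ↔ e (σ i) ≠ 0 := by
      intro i
      rw [hτ]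
      rcases hv (σ i) with h1 | h1 <;> simp [h1]
    unfold hammingNorm
    refine Finset.card_bij (fun i _ => σ i) ?_ ?_ ?_
    · intro i hi
      simpa [key] using hi
    · intro a _ b _ h
      exact σ.injective h
    · intro b hb
      refine ⟨σ.symm b, ?_, by simp⟩
      simpa [key] using hb
end
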